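/- For every integer n ≥ 0, p(49n+33) ≡ 0 (mod 49). -/

import Mathlib

/-- The partition function `p(n)`: the number of partitions of `n`. -/
def p (n : ℕ) : ℕ := Fintype.card (Nat.Partition n)

/-!
Split `E = ∏ (1 - Xⁱ)` according to the residues of the exponents modulo `7`. By the pentagonal
number theorem only the parts `A`, `B`, `C`, `D` with residues `0`, `1`, `2`, `5` are nonzero, and
Jacobi's formula for `E³` gives four cubic relations between them, among them `A B D = C³`. These
relations produce an explicit multiple `E M = H²` of `E`, where `H = A³ B + B³ D + D³ A + 8 C⁴` only
has exponents `1` modulo `7`. So the part of `E⁻¹` with exponents `5` modulo `7`, times `H²`, is the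
part `7 C³ (H - 7 C⁴)` of `M` with exponents divisible by `7`. Modulo `7` we have `C = -X² E⁴⁹` and
`H² = -C E⁷ ≠ 0`, so that part of `E⁻¹` is of the form `7 T`, and `T H = C³` modulo `7` gives
`T = ± X⁵ E¹¹⁹`. Finally, modulo `7`, `E¹¹⁹ = E¹⁷(X⁷)` and `E¹⁷ = E³ · E²(X⁷)`, and `E³` has no
terms with exponents `2`, `4`, `5`, `6` modulo `7`.
-/

section FiniteTripleProduct

open Polynomial

variable {S : Type*} [CommRing S] (q : S)

/-- The finite Euler product `(q; q)_N = (1 - q) (1 - q²) ⋯ (1 - q^N)`. -/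
def qPochhammer (N : ℕ) : S := ∏ i ∈ Finset.range N, (1 - q ^ (i + 1))

theorem qPochhammer_zero : qPochhammer q 0 = 1 := Finset.prod_range_zero _

theorem qPochhammer_succ (N : ℕ) :
    qPochhammer q (N + 1) = qPochhammer q N * (1 - q ^ (N + 1)) :=
  Finset.prod_range_succ _ _

theorem pow_dvd_qPochhammer_sub {M N : ℕ} (h : M ≤ N) :
    q ^ (M + 1) ∣ qPochhammer q M - qPochhammer q N := by
  induction N, h using Nat.le_induction with
  | base => simp
  | succ N hMN ih =>
    have hstep : qPochhammer q M - qPochhammer q (N + 1) =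
        qPochhammer q M - qPochhammer q N + qPochhammer q N * q ^ (N + 1) := by
      rw [qPochhammer_succ]; ring
    rw [hstep]
    exact dvd_add ih (dvd_mul_of_dvd_right (pow_dvd_pow q (by lia)) _)

/-- The finite form `(z - 1) ∏_{i ≤ N} (z - qⁱ) (1 - z qⁱ)` of the product side of Jacobi's triple
product, as a polynomial in `z`. -/
noncomputable def jacobiPolynomial (N : ℕ) : S[X] :=
  (X - 1) * ∏ i ∈ Finset.range N, ((X - C (q ^ (i + 1))) * (1 - C (q ^ (i + 1)) * X))

theorem jacobiPolynomial_zero : jacobiPolynomial q 0 = X - 1 := by simp [jacobiPolynomial]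

theorem jacobiPolynomial_succ (N : ℕ) : jacobiPolynomial q (N + 1) =
    jacobiPolynomial q N * ((X - C (q ^ (N + 1))) * (1 - C (q ^ (N + 1)) * X)) := by
  rw [jacobiPolynomial, Finset.prod_range_succ, ← mul_assoc, jacobiPolynomial]

theorem natDegree_jacobiPolynomial_le (N : ℕ) : (jacobiPolynomial q N).natDegree ≤ 2 * N + 1 := by
  induction N with
  | zero => rw [jacobiPolynomial_zero]; compute_degree
  | succ N ih =>
    have hfactor : ((X - C (q ^ (N + 1))) * (1 - C (q ^ (N + 1)) * X)).natDegree ≤ 2 := by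
      compute_degree
    rw [jacobiPolynomial_succ]
    exact natDegree_mul_le.trans (by lia)

theorem jacobiPolynomial_comp_C_mul_X (N : ℕ) :
    (X - C (q ^ N)) * (jacobiPolynomial q N).comp (C q * X) =
      C (q ^ N) * (C (q ^ (N + 1)) * X - 1) * jacobiPolynomial q N := by
  induction N with
  | zero =>
    simp only [jacobiPolynomial_zero, sub_comp, X_comp, one_comp, pow_zero, pow_one, zero_add, C_1]
    ring
  | succ N ih =>
    simp only [jacobiPolynomial_succ, mul_comp, sub_comp, X_comp, C_comp, one_comp] at ih ⊢
    simp only [map_pow] at ih ⊢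
    linear_combination (X - C q ^ (N + 1)) * C q * (1 - C q ^ (N + 2) * X) * ih

theorem coeff_jacobiPolynomial_succ (N k : ℕ) :
    (jacobiPolynomial q N).coeff k * (q ^ k - q ^ (2 * N + 1)) =
      q ^ N * (q ^ (k + 1) - 1) * (jacobiPolynomial q N).coeff (k + 1) := by
  have h := congrArg (coeff · (k + 1)) (jacobiPolynomial_comp_C_mul_X q N)
  simp only [sub_mul, mul_assoc, coeff_sub, coeff_X_mul, coeff_C_mul, comp_C_mul_X_coeff, mul_sub,
    one_mul] at h
  linear_combination h

theorem eval_one_derivative_jacobiPolynomial (N : ℕ) :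
    (derivative (jacobiPolynomial q N)).eval 1 = qPochhammer q N ^ 2 := by
  have hprod : (∏ i ∈ Finset.range N, ((X - C (q ^ (i + 1))) * (1 - C (q ^ (i + 1)) * X))).eval 1 =
      qPochhammer q N ^ 2 := by
    simp only [eval_prod, eval_mul, eval_sub, eval_X, eval_C, eval_one, mul_one, ← sq,
      Finset.prod_pow, qPochhammer]
  rw [jacobiPolynomial, derivative_mul, eval_add, eval_mul, eval_mul, hprod]
  simp

theorem sum_mul_coeff_jacobiPolynomial (N : ℕ) :
    ∑ k ∈ Finset.range (2 * N + 2), (k : S) * (jacobiPolynomial q N).coeff k =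
      qPochhammer q N ^ 2 := by
  rw [← eval_one_derivative_jacobiPolynomial, derivative_eval,
    sum_over_range' _ (by simp) (2 * N + 2)
      (Nat.lt_succ_of_le (natDegree_jacobiPolynomial_le q N))]
  simp only [one_pow, mul_one, mul_comm (Polynomial.coeff _ _)]

/-- The triangular number `j (j + 1) / 2`, for an arbitrary integer `j`. -/
def triangular (j : ℤ) : ℕ := (j * (j + 1) / 2).toNat

theorem two_mul_natCast_triangular (j : ℤ) : 2 * (triangular j : ℤ) = j * (j + 1) := by
  have hdiv : 2 * (j * (j + 1) / 2) = j * (j + 1) :=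
    Int.two_mul_ediv_two_of_even (Int.even_mul_succ_self j)
  have hnonneg : 0 ≤ j * (j + 1) := by
    rcases le_or_gt 0 j with h | h
    · positivity
    · nlinarith
  rw [triangular, Int.toNat_of_nonneg (by lia), hdiv]

theorem triangular_eq_triangular_iff {i j : ℤ} :
    triangular i = triangular j ↔ i = j ∨ i = -1 - j := by
  have hi := two_mul_natCast_triangular i
  have hj := two_mul_natCast_triangular j
  have hfactor : 2 * ((triangular i : ℤ) - triangular j) = (i - j) * (i + j + 1) := by
    linear_combination hi - hj
  constructor
  · intro h
    rw [h, sub_self, mul_zero, eq_comm, mul_eq_zero] at hfactor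
    lia
  · rintro (rfl | rfl)
    · rfl
    · lia

theorem le_triangular (j : ℤ) : j ≤ triangular j := by
  have h := two_mul_natCast_triangular j
  rcases le_or_gt j 0 with hj | hj
  · exact hj.trans (by positivity)
  · nlinarith

theorem triangular_add_one (j : ℤ) : (triangular (j + 1) : ℤ) = triangular j + (j + 1) := by
  linarith [two_mul_natCast_triangular j, two_mul_natCast_triangular (j + 1)]

theorem coeff_zero_jacobiPolynomial (N : ℕ) :
    (jacobiPolynomial q N).coeff 0 = (-1) ^ (N + 1) * q ^ triangular N := by
  induction N with
  | zero => simp [jacobiPolynomial_zero, triangular]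
  | succ N ih =>
    have htri : triangular (N + 1 : ℕ) = triangular N + (N + 1) := by
      exact_mod_cast triangular_add_one N
    rw [jacobiPolynomial_succ, mul_coeff_zero, ih, htri]
    simp only [mul_coeff_zero, coeff_sub, coeff_X_zero, coeff_C_zero, coeff_one_zero]
    ring

variable {q}

/-- This is Cauchy's finite form of Jacobi's triple product with the denominators cleared: the
coefficients are, up to sign and a power of `q`, the Gaussian binomials `[2N + 1, k]`. -/
theorem coeff_jacobiPolynomial_mul (hq : IsLeftRegular q) {N k m : ℕ} (hkm : k + m = 2 * N + 1) :
    (jacobiPolynomial q N).coeff k * (qPochhammer q k * qPochhammer q m) =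
      (-1) ^ (k + N + 1) * q ^ triangular (N - k) * qPochhammer q (2 * N + 1) := by
  induction k generalizing m with
  | zero =>
    obtain rfl : m = 2 * N + 1 := by lia
    simp [coeff_zero_jacobiPolynomial, qPochhammer_zero]
  | succ k ih =>
    have hprev := ih (m := m + 1) (by lia)
    have hrec := coeff_jacobiPolynomial_succ q N k
    have htri : N + triangular (N - (k + 1 : ℕ)) = k + triangular (N - k) := by
      have h := triangular_add_one (N - (k + 1 : ℕ))
      rw [show (N : ℤ) - (k + 1 : ℕ) + 1 = N - k by push_cast; ring] at h
      lia
    have hpow : q ^ N * q ^ triangular (N - (k + 1 : ℕ)) = q ^ k * q ^ triangular (N - k) := by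
      rw [← pow_add, ← pow_add, htri]
    rw [show 2 * N + 1 = k + (m + 1) by lia, pow_add] at hrec
    rw [qPochhammer_succ] at hprev ⊢
    apply hq.pow N
    linear_combination qPochhammer q k * qPochhammer q m * hrec - q ^ k * hprev +
      (-1) ^ (k + N + 1) * qPochhammer q (2 * N + 1) * hpow

end FiniteTripleProduct

section JacobiCubeIdentity

open PowerSeries

variable (R : Type*) [CommRing R]

theorem isUnit_qPochhammer_X (N : ℕ) : IsUnit (qPochhammer (X : R⟦X⟧) N) := by
  rw [isUnit_iff_constantCoeff]
  simp [qPochhammer, map_prod]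

theorem X_pow_dvd_pentagonalSeries_sub (N : ℕ) :
    (X : R⟦X⟧) ^ (N + 1) ∣ pentagonalSeries R - qPochhammer X N := by
  refine X_pow_dvd_iff.2 fun n hn => ?_
  obtain ⟨M, hM, hNM⟩ := ((Filter.tendsto_finset_range.eventually
    (coeff_prod_one_sub_X_pow_eventually_eq R n)).and (Filter.eventually_ge_atTop N)).exists
  have hcoeff := X_pow_dvd_iff.1 (pow_dvd_qPochhammer_sub (X : R⟦X⟧) hNM) n hn
  rw [map_sub, sub_eq_zero] at hcoeff ⊢
  rw [← hM, hcoeff, qPochhammer]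

theorem X_pow_dvd_coeff_jacobiPolynomial_mul_sub {N k : ℕ} (hk : k ≤ 2 * N + 1) :
    (X : R⟦X⟧) ^ (N + 1) ∣ (jacobiPolynomial X N).coeff k * pentagonalSeries R -
      (-1) ^ (k + N + 1) * X ^ triangular (N - k) := by
  obtain ⟨m, hkm⟩ := Nat.exists_eq_add_of_le hk
  set E := pentagonalSeries R
  set t := triangular (N - k)
  have hunit := (isUnit_qPochhammer_X R k).mul (isUnit_qPochhammer_X R m)
  have hcoeff := coeff_jacobiPolynomial_mul (q := (X : R⟦X⟧)) (fun _ _ => X_mul_cancel) hkm.symm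
  have hk_dvd : (X : R⟦X⟧) ^ (N + 1) ∣
      X ^ t * (qPochhammer X (2 * N + 1) - qPochhammer X k) := by
    have hexp : N + 1 ≤ t + (k + 1) := by have := le_triangular (N - k); lia
    rw [← neg_sub, mul_neg, dvd_neg]
    exact (pow_dvd_pow X hexp).trans
      (pow_add (X : R⟦X⟧) _ _ ▸ mul_dvd_mul_left _ (pow_dvd_qPochhammer_sub X hk))
  have hm_dvd : (X : R⟦X⟧) ^ (N + 1) ∣ X ^ t * (E - qPochhammer X m) := by
    have hreflect : t = triangular (-1 - (N - k)) :=
      triangular_eq_triangular_iff.2 (Or.inr (by ring))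
    have hexp : N + 1 ≤ t + (m + 1) := by have := le_triangular (-1 - (N - k)); lia
    exact (pow_dvd_pow X hexp).trans
      (pow_add (X : R⟦X⟧) _ _ ▸ mul_dvd_mul_left _ (X_pow_dvd_pentagonalSeries_sub R m))
  rw [← hunit.dvd_mul_right]
  convert (hk_dvd.mul_right ((-1) ^ (k + N + 1) * E)).add
    (hm_dvd.mul_right ((-1) ^ (k + N + 1) * qPochhammer X k)) using 1
  linear_combination E * hcoeff

theorem X_pow_dvd_pentagonalSeries_cube_sub (N : ℕ) :
    (X : R⟦X⟧) ^ (N + 1) ∣ pentagonalSeries R ^ 3 - ∑ k ∈ Finset.range (2 * N + 2),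
      (k : R⟦X⟧) * ((-1) ^ (k + N + 1) * X ^ triangular (N - k)) := by
  set E := pentagonalSeries R
  have hsquare : (X : R⟦X⟧) ^ (N + 1) ∣ E ^ 2 - qPochhammer X N ^ 2 :=
    (X_pow_dvd_pentagonalSeries_sub R N).trans (sub_dvd_pow_sub_pow _ _ 2)
  have hsum : (X : R⟦X⟧) ^ (N + 1) ∣ ∑ k ∈ Finset.range (2 * N + 2), (k : R⟦X⟧) *
      ((jacobiPolynomial X N).coeff k * E - (-1) ^ (k + N + 1) * X ^ triangular (N - k)) :=
    Finset.dvd_sum fun k hk => dvd_mul_of_dvd_right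
      (X_pow_dvd_coeff_jacobiPolynomial_mul_sub R (by have := Finset.mem_range.1 hk; lia)) _
  convert (hsquare.mul_right E).add hsum using 1
  simp only [mul_sub, Finset.sum_sub_distrib, ← mul_assoc, ← Finset.sum_mul,
    sum_mul_coeff_jacobiPolynomial]
  ring

theorem coeff_pentagonalSeries_cube {n N : ℕ} (h : n ≤ N) :
    (pentagonalSeries R ^ 3).coeff n = ∑ k ∈ Finset.range (2 * N + 2),
      if n = triangular (N - k) then (k : R) * (-1) ^ (k + N + 1) else 0 := by
  have hcoeff := X_pow_dvd_iff.1 (X_pow_dvd_pentagonalSeries_cube_sub R N) n (by lia)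
  rw [map_sub, sub_eq_zero, map_sum] at hcoeff
  rw [hcoeff]
  refine Finset.sum_congr rfl fun k _ => ?_
  have hC : (k : R⟦X⟧) * (-1) ^ (k + N + 1) = C ((k : R) * (-1) ^ (k + N + 1)) := by simp
  rw [← mul_assoc, hC, coeff_C_mul, coeff_X_pow, mul_ite, mul_one, mul_zero]

theorem coeff_pentagonalSeries_cube_eq_zero {n : ℕ} (h : n ∉ Set.range triangular) :
    (pentagonalSeries R ^ 3).coeff n = 0 := by
  rw [coeff_pentagonalSeries_cube R le_rfl]
  exact Finset.sum_eq_zero fun k _ => if_neg fun hk => h ⟨_, hk.symm⟩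

/-- This is Jacobi's identity `∏ (1 - Xⁱ)³ = ∑_{j ≥ 0} (-1)ʲ (2 j + 1) X ^ (j (j + 1) / 2)`: the
indices `j` and `-1 - j` give the same coefficient. -/
theorem coeff_triangular_pentagonalSeries_cube (j : ℤ) :
    (pentagonalSeries R ^ 3).coeff (triangular j) = Int.negOnePow j * (2 * j + 1) := by
  have hj := le_triangular j
  have hreflect : triangular (-1 - j) = triangular j :=
    triangular_eq_triangular_iff.2 (Or.inr rfl)
  have hj' := hreflect ▸ le_triangular (-1 - j)
  set N := triangular j
  obtain ⟨k, hk⟩ := Int.eq_ofNat_of_zero_le (sub_nonneg.2 hj)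
  obtain ⟨l, hl⟩ := Int.eq_ofNat_of_zero_le (sub_nonneg.2 hj')
  rw [coeff_pentagonalSeries_cube R le_rfl, Finset.sum_eq_add k l (by lia), if_pos, if_pos]
  · have hsign_k : (-1 : R) ^ (k + N + 1) = -(Int.negOnePow j : R) := by
      rw [← Int.cast_negOnePow_natCast, show ((k + N + 1 : ℕ) : ℤ) = 2 * N - j + 1 by lia,
        Int.negOnePow_succ, Int.negOnePow_sub, Int.negOnePow_two_mul, one_mul]
      simp
    have hsign_l : (-1 : R) ^ (l + N + 1) = (Int.negOnePow j : R) := by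
      rw [← Int.cast_negOnePow_natCast, show ((l + N + 1 : ℕ) : ℤ) = 2 * (N + 1) + j by lia,
        Int.negOnePow_add, Int.negOnePow_two_mul, one_mul]
    have hcast_k : (k : R) = N - j := by exact_mod_cast congrArg (Int.cast : ℤ → R) hk.symm
    have hcast_l : (l : R) = N + 1 + j := by
      rw [show (l : R) = ((l : ℤ) : R) by simp, show (l : ℤ) = N + 1 + j by lia]
      simp
    rw [hsign_k, hsign_l, hcast_k, hcast_l]
    ring
  · rw [← hl, sub_sub_cancel, hreflect]
  · rw [← hk, sub_sub_cancel]
  · intro i _ hi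
    refine if_neg fun hij => ?_
    rcases triangular_eq_triangular_iff.1 hij with h | h <;> lia
  · intro h
    exact absurd (Finset.mem_range.2 (by lia)) h
  · intro h
    exact absurd (Finset.mem_range.2 (by lia)) h

end JacobiCubeIdentity

section ResidueParts

open PowerSeries

variable {R : Type*} [CommRing R] {m : ℕ}

variable (R) in
/-- The power series all of whose exponents lie in the residue class `r` modulo `m`; these
submodules grade `R⟦X⟧` by `ZMod m`. -/
def residueSubmodule (r : ZMod m) : Submodule R R⟦X⟧ where
  carrier := {f | ∀ n : ℕ, (n : ZMod m) ≠ r → f.coeff n = 0}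
  zero_mem' := fun n _ => map_zero (coeff n)
  add_mem' := fun hf hg n hn => by rw [map_add, hf n hn, hg n hn, add_zero]
  smul_mem' := fun c f hf n hn => by rw [coeff_smul, hf n hn, smul_zero]

instance : SetLike.GradedMonoid (residueSubmodule R (m := m)) where
  one_mem n hn := by
    rw [coeff_one, if_neg]
    rintro rfl
    exact hn Nat.cast_zero
  mul_mem r s f g hf hg n hn := by
    rw [coeff_mul]
    refine Finset.sum_eq_zero fun ⟨i, j⟩ hij => ?_
    have hsum : (i : ZMod m) + j = n := by
      rw [← Nat.cast_add, Finset.HasAntidiagonal.mem_antidiagonal.1 hij]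
    by_cases hi : (i : ZMod m) = r
    · rw [hg j (fun hj => hn (by rw [← hsum, hi, hj])), mul_zero]
    · rw [hf i hi, zero_mul]

theorem mul_mul_mem_residueSubmodule {r s t : ZMod m} {f g h : R⟦X⟧}
    (hf : f ∈ residueSubmodule R r) (hg : g ∈ residueSubmodule R s)
    (hh : h ∈ residueSubmodule R t) : f * g * h ∈ residueSubmodule R (r + s + t) :=
  SetLike.mul_mem_graded (SetLike.mul_mem_graded hf hg) hh

/-- The sum of the terms of a power series whose exponents lie in the residue class `r`. -/
noncomputable def residuePart (r : ZMod m) : R⟦X⟧ →ₗ[R] R⟦X⟧ where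
  toFun f := .mk fun n => if (n : ZMod m) = r then f.coeff n else 0
  map_add' f g := by ext n; simp only [map_add, coeff_mk]; split_ifs <;> simp
  map_smul' c f := by ext n; simp

theorem coeff_residuePart (r : ZMod m) (f : R⟦X⟧) (n : ℕ) :
    (residuePart r f).coeff n = if (n : ZMod m) = r then f.coeff n else 0 := by
  simp [residuePart]

theorem residuePart_mem (r : ZMod m) (f : R⟦X⟧) : residuePart r f ∈ residueSubmodule R r :=
  fun n hn => by rw [coeff_residuePart, if_neg hn]

theorem residuePart_of_mem {r : ZMod m} {f : R⟦X⟧} (hf : f ∈ residueSubmodule R r) :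
    residuePart r f = f := by
  ext n
  rw [coeff_residuePart, ite_eq_left_iff]
  exact fun hn => (hf n hn).symm

theorem residuePart_of_mem_of_ne {r s : ZMod m} {f : R⟦X⟧} (hf : f ∈ residueSubmodule R s)
    (h : s ≠ r) : residuePart r f = 0 := by
  ext n
  rw [coeff_residuePart, map_zero, ite_eq_right_iff]
  exact fun hn => hf n (hn.trans_ne h.symm)

theorem residuePart_mul_of_mem (r : ZMod m) {s : ZMod m} (f : R⟦X⟧) {g : R⟦X⟧}
    (hg : g ∈ residueSubmodule R s) : residuePart r (f * g) = residuePart (r - s) f * g := by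
  ext n
  by_cases hn : (n : ZMod m) = r
  · rw [coeff_residuePart, if_pos hn, coeff_mul, coeff_mul]
    refine Finset.sum_congr rfl fun ⟨i, j⟩ hij => ?_
    by_cases hj : (j : ZMod m) = s
    · have hi : (i : ZMod m) = r - s := by
        rw [eq_sub_iff_add_eq, ← hj, ← hn, ← Nat.cast_add,
          Finset.HasAntidiagonal.mem_antidiagonal.1 hij]
      rw [coeff_residuePart, if_pos hi]
    · rw [hg j hj, mul_zero, mul_zero]
  · have hmem := SetLike.mul_mem_graded (residuePart_mem (r - s) f) hg
    rw [coeff_residuePart, if_neg hn, hmem n (by rwa [sub_add_cancel])]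

variable {A B C D : R⟦X⟧} (hA : A ∈ residueSubmodule R (0 : ZMod 7))
  (hB : B ∈ residueSubmodule R (1 : ZMod 7)) (hC : C ∈ residueSubmodule R (2 : ZMod 7))
  (hD : D ∈ residueSubmodule R (5 : ZMod 7))

include hA hB hC hD

theorem residuePart_mul_sum (r : ZMod 7) (f : R⟦X⟧) :
    residuePart r (f * (A + B + C + D)) = residuePart r f * A + residuePart (r - 1) f * B +
      residuePart (r - 2) f * C + residuePart (r - 5) f * D := by
  simp only [mul_add, map_add, residuePart_mul_of_mem _ f hA, residuePart_mul_of_mem _ f hB,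
    residuePart_mul_of_mem _ f hC, residuePart_mul_of_mem _ f hD, sub_zero]

theorem residuePart_sum (r : ZMod 7) :
    residuePart r (A + B + C + D) = (if r = 0 then A else 0) + (if r = 1 then B else 0) +
      (if r = 2 then C else 0) + (if r = 5 then D else 0) := by
  have hpart {s : ZMod 7} {f : R⟦X⟧} (hf : f ∈ residueSubmodule R s) :
      residuePart r f = if r = s then f else 0 := by
    split_ifs with h
    · exact residuePart_of_mem (h ▸ hf)
    · exact residuePart_of_mem_of_ne hf (Ne.symm h)
  rw [map_add, map_add, map_add, hpart hA, hpart hB, hpart hC, hpart hD]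

theorem residuePart_cube :
    residuePart (2 : ZMod 7) ((A + B + C + D) ^ 3) = 3 * (A ^ 2 * C + A * B ^ 2 + C ^ 2 * D) ∧
    residuePart (4 : ZMod 7) ((A + B + C + D) ^ 3) = 3 * (A * C ^ 2 + B ^ 2 * C + B * D ^ 2) ∧
    residuePart (5 : ZMod 7) ((A + B + C + D) ^ 3) = 3 * (A ^ 2 * D + B * C ^ 2 + C * D ^ 2) ∧
    residuePart (6 : ZMod 7) ((A + B + C + D) ^ 3) = 6 * (A * B * D) + C ^ 3 := by
  simp +decide only [pow_succ, pow_zero, one_mul, residuePart_mul_sum hA hB hC hD,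
    residuePart_sum hA hB hC hD, if_true, if_false]
  refine ⟨?_, ?_, ?_, ?_⟩ <;> ring

end ResidueParts

section DissectionRelations

instance : Fact (Nat.Prime 7) := ⟨by norm_num⟩

variable {S : Type*} [CommRing S]

/-- The relations satisfied by the parts `A`, `B`, `C`, `D` of `∏ (1 - Xⁱ)` with exponents
`0`, `1`, `2`, `5` modulo `7`, which say that the cube of the product has no terms with exponents
`2`, `4`, `5` modulo `7` and that its part with exponents `6` modulo `7` is `7 * C ^ 3`. -/
structure SevenDissection (A B C D : S) : Prop where
  part_two : A ^ 2 * C + A * B ^ 2 + C ^ 2 * D = 0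
  part_four : A * C ^ 2 + B ^ 2 * C + B * D ^ 2 = 0
  part_five : A ^ 2 * D + B * C ^ 2 + C * D ^ 2 = 0
  part_six : A * B * D = C ^ 3

/-- The quartic forms in the parts `A`, `B`, `C`, `D` of `∏ (1 - Xⁱ)` that only have exponents `1`
modulo `7` and occur in the expansion of `(A + B + C + D)⁻¹`. -/
def quarticForm (A B C D : S) (i j k l : ℤ) : S :=
  i * (A ^ 3 * B) + j * (B ^ 3 * D) + k * (D ^ 3 * A) + l * C ^ 4

/-- The factor `M` with `(A + B + C + D) * M = quarticForm A B C D 1 1 1 8 ^ 2`. Put `a = A / C`,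
`b = B / C`, `d = D / C`, so that `a b d = 1`; then `1, a, b, d, a⁻¹, b⁻¹, d⁻¹` is a basis over the
rational functions of `u = a³ b`, and `M` is found by inverting `1 + a + b + d` in that basis. Each
summand has its exponents in a single residue class modulo `7`. -/
def quarticCofactor (A B C D : S) : S :=
  7 * C ^ 3 * quarticForm A B C D 1 1 1 1 +
    (A * C ^ 2 * quarticForm A B C D (-3) (-9) 5 (-4) + B ^ 5 * C * D) +
    (B * C ^ 2 * quarticForm A B C D 5 (-3) (-9) (-4) + A * C * D ^ 5) +
    (C ^ 2 * D * quarticForm A B C D (-9) 5 (-3) (-4) + A ^ 5 * B * C) +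
    (B * C * D * quarticForm A B C D (-2) (-2) 11 17 + A ^ 5 * B ^ 2) +
    (A * B * C * quarticForm A B C D (-2) 11 (-2) 17 + A ^ 2 * D ^ 5) +
    (A * C * D * quarticForm A B C D 11 (-2) (-2) 17 + B ^ 5 * D ^ 2)

variable {A B C D : S}

namespace SevenDissection

variable (h : SevenDissection A B C D)

include h

theorem quarticForm_sq : quarticForm A B C D 1 1 1 8 ^ 2 =
    14 * (C ^ 4 * quarticForm A B C D 1 1 1 4) - C * (A ^ 7 + B ^ 7 + C ^ 7 + D ^ 7) := by
  obtain ⟨h₂, h₄, h₅, h₆⟩ := h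
  simp only [quarticForm]
  grind

theorem sum_mul_quarticCofactor :
    (A + B + C + D) * quarticCofactor A B C D = quarticForm A B C D 1 1 1 8 ^ 2 := by
  obtain ⟨h₂, h₄, h₅, h₆⟩ := h
  simp only [quarticCofactor, quarticForm]
  grind

theorem quarticForm_sq_of_charP [CharP S 7] :
    quarticForm A B C D 1 1 1 8 ^ 2 = -C * (A + B + C + D) ^ 7 := by
  have h14 : (14 : S) = 0 := by exact_mod_cast (CharP.cast_eq_zero_iff S 7 14).2 (by norm_num)
  rw [h.quarticForm_sq, h14, add_pow_char, add_pow_char, add_pow_char]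
  ring

end SevenDissection

end DissectionRelations

section CofactorParts

open PowerSeries

variable {R : Type*} [CommRing R] {A B C D : R⟦X⟧}
  (hA : A ∈ residueSubmodule R (0 : ZMod 7))
  (hB : B ∈ residueSubmodule R (1 : ZMod 7)) (hC : C ∈ residueSubmodule R (2 : ZMod 7))
  (hD : D ∈ residueSubmodule R (5 : ZMod 7))

include hA hB hC hD

theorem quarticForm_mem (i j k l : ℤ) :
    quarticForm A B C D i j k l ∈ residueSubmodule R (1 : ZMod 7) := by
  have hcast (i : ℤ) {f : R⟦X⟧} (hf : f ∈ residueSubmodule R (1 : ZMod 7)) :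
      i * f ∈ residueSubmodule R (1 : ZMod 7) :=
    zsmul_eq_mul f i ▸ zsmul_mem hf i
  have hAB : A ^ 3 * B ∈ residueSubmodule R (1 : ZMod 7) :=
    SetLike.mul_mem_graded (SetLike.pow_mem_graded 3 hA) hB
  have hBD : B ^ 3 * D ∈ residueSubmodule R (1 : ZMod 7) :=
    SetLike.mul_mem_graded (SetLike.pow_mem_graded 3 hB) hD
  have hDA : D ^ 3 * A ∈ residueSubmodule R (1 : ZMod 7) :=
    SetLike.mul_mem_graded (SetLike.pow_mem_graded 3 hD) hA
  have hC4 : C ^ 4 ∈ residueSubmodule R (1 : ZMod 7) := SetLike.pow_mem_graded 4 hC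
  exact add_mem (add_mem (add_mem (hcast i hAB) (hcast j hBD)) (hcast k hDA)) (hcast l hC4)

theorem residuePart_quarticCofactor : residuePart (0 : ZMod 7) (quarticCofactor A B C D) =
    7 * C ^ 3 * quarticForm A B C D 1 1 1 1 := by
  have hQ := quarticForm_mem hA hB hC hD
  have hpow {r : ZMod 7} {f : R⟦X⟧} (n : ℕ) (hf : f ∈ residueSubmodule R r) :=
    SetLike.pow_mem_graded n hf
  have hadd {s : ZMod 7} {f g : R⟦X⟧} (hg : g ∈ residueSubmodule R s) (hs : s ≠ 0) :
      residuePart (0 : ZMod 7) (f + g) = residuePart (0 : ZMod 7) f := by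
    rw [map_add, residuePart_of_mem_of_ne hg hs, add_zero]
  have hzero : 7 * C ^ 3 * quarticForm A B C D 1 1 1 1 ∈ residueSubmodule R (0 : ZMod 7) := by
    exact_mod_cast mul_mul_mem_residueSubmodule (SetLike.natCast_mem_graded _ 7) (hpow 3 hC)
      (hQ 1 1 1 1)
  have hfive : A * C ^ 2 * quarticForm A B C D (-3) (-9) 5 (-4) + B ^ 5 * C * D ∈
      residueSubmodule R (5 : ZMod 7) :=
    add_mem (mul_mul_mem_residueSubmodule hA (hpow 2 hC) (hQ _ _ _ _))
      (mul_mul_mem_residueSubmodule (hpow 5 hB) hC hD)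
  have hsix : B * C ^ 2 * quarticForm A B C D 5 (-3) (-9) (-4) + A * C * D ^ 5 ∈
      residueSubmodule R (6 : ZMod 7) :=
    add_mem (mul_mul_mem_residueSubmodule hB (hpow 2 hC) (hQ _ _ _ _))
      (mul_mul_mem_residueSubmodule hA hC (hpow 5 hD))
  have hthree : C ^ 2 * D * quarticForm A B C D (-9) 5 (-3) (-4) + A ^ 5 * B * C ∈
      residueSubmodule R (3 : ZMod 7) :=
    add_mem (mul_mul_mem_residueSubmodule (hpow 2 hC) hD (hQ _ _ _ _))
      (mul_mul_mem_residueSubmodule (hpow 5 hA) hB hC)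
  have htwo : B * C * D * quarticForm A B C D (-2) (-2) 11 17 + A ^ 5 * B ^ 2 ∈
      residueSubmodule R (2 : ZMod 7) :=
    add_mem (SetLike.mul_mem_graded (mul_mul_mem_residueSubmodule hB hC hD) (hQ _ _ _ _))
      (SetLike.mul_mem_graded (hpow 5 hA) (hpow 2 hB))
  have hfour : A * B * C * quarticForm A B C D (-2) 11 (-2) 17 + A ^ 2 * D ^ 5 ∈
      residueSubmodule R (4 : ZMod 7) :=
    add_mem (SetLike.mul_mem_graded (mul_mul_mem_residueSubmodule hA hB hC) (hQ _ _ _ _))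
      (SetLike.mul_mem_graded (hpow 2 hA) (hpow 5 hD))
  have hone : A * C * D * quarticForm A B C D 11 (-2) (-2) 17 + B ^ 5 * D ^ 2 ∈
      residueSubmodule R (1 : ZMod 7) :=
    add_mem (SetLike.mul_mem_graded (mul_mul_mem_residueSubmodule hA hC hD) (hQ _ _ _ _))
      (SetLike.mul_mem_graded (hpow 5 hB) (hpow 2 hD))
  rw [quarticCofactor, hadd hone (by decide), hadd hfour (by decide), hadd htwo (by decide),
    hadd hthree (by decide), hadd hsix (by decide), hadd hfive (by decide),
    residuePart_of_mem hzero]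

theorem SevenDissection.residuePart_mul_quarticForm_sq (h : SevenDissection A B C D) {P : R⟦X⟧}
    (hP : P * (A + B + C + D) = 1) :
    residuePart (5 : ZMod 7) P * quarticForm A B C D 1 1 1 8 ^ 2 =
      7 * C ^ 3 * quarticForm A B C D 1 1 1 1 := by
  have hsq := SetLike.pow_mem_graded 2 (quarticForm_mem hA hB hC hD 1 1 1 8)
  rw [← residuePart_quarticCofactor hA hB hC hD, ← one_mul (quarticCofactor A B C D), ← hP,
    mul_assoc, h.sum_mul_quarticCofactor, residuePart_mul_of_mem 0 P hsq]
  rfl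

end CofactorParts

section SevenDissectionOfEulerProduct

open PowerSeries

variable {R : Type*} [CommRing R]

theorem residuePart_eq_smul_X_pow_mul_expand {ι : Type*} {e : ι → ℕ} {φ : ι → ι} {f : R⟦X⟧}
    {m k r : ℕ} (hk : k ≠ 0) (hmk : m ∣ k) {c : R} (hf : ∀ n ∉ Set.range e, f.coeff n = 0)
    (hφ : ∀ i, e (φ i) = k * e i + r) (hr : ∀ i, (e i : ZMod m) = r → i ∈ Set.range φ)
    (hc : ∀ i, f.coeff (e (φ i)) = c * f.coeff (e i)) :
    residuePart (r : ZMod m) f = c • (X ^ r * expand k hk f) := by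
  ext n
  rw [coeff_residuePart, coeff_smul, smul_eq_mul, coeff_X_pow_mul', coeff_expand]
  by_cases hn : ∃ l, n = k * l + r
  · obtain ⟨l, rfl⟩ := hn
    have hcast : ((k * l + r : ℕ) : ZMod m) = r := by
      rw [Nat.cast_add, Nat.cast_mul, (ZMod.natCast_eq_zero_iff k m).2 hmk, zero_mul, zero_add]
    rw [if_pos hcast, if_pos (Nat.le_add_left _ _), Nat.add_sub_cancel,
      if_pos (Nat.dvd_mul_right _ _), Nat.mul_div_cancel_left _ (Nat.pos_of_ne_zero hk)]
    by_cases hl : l ∈ Set.range e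
    · obtain ⟨i, rfl⟩ := hl
      rw [← hφ, hc]
    · rw [hf l hl, mul_zero]
      refine hf _ ?_
      rintro ⟨i, hi⟩
      obtain ⟨j, rfl⟩ := hr i (hi ▸ hcast)
      have := hφ j
      exact hl ⟨j, Nat.eq_of_mul_eq_mul_left (Nat.pos_of_ne_zero hk) (by lia)⟩
  · have hrhs : (if r ≤ n then if k ∣ n - r then f.coeff ((n - r) / k) else 0 else 0) = 0 := by
      split_ifs with hrn hdvd
      · obtain ⟨l, hl⟩ := hdvd
        exact absurd ⟨l, by lia⟩ hn
      · rfl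
      · rfl
    rw [hrhs, mul_zero, ite_eq_right_iff]
    refine fun hnr => hf n ?_
    rintro ⟨i, rfl⟩
    obtain ⟨j, rfl⟩ := hr i hnr
    exact hn ⟨_, hφ j⟩

theorem residuePart_eq_zero {ι : Type*} {e : ι → ℕ} {f : R⟦X⟧} {m : ℕ} {r : ZMod m}
    (hf : ∀ n ∉ Set.range e, f.coeff n = 0) (hr : ∀ i, (e i : ZMod m) ≠ r) :
    residuePart r f = 0 := by
  ext n
  rw [coeff_residuePart, map_zero, ite_eq_right_iff]
  refine fun hn => hf n ?_
  rintro ⟨i, rfl⟩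
  exact hr i hn

theorem powerSeries_ofNat_ne_zero {n : ℕ} [n.AtLeastTwo] (h : (ofNat(n) : R) ≠ 0) :
    (ofNat(n) : R⟦X⟧) ≠ 0 := by
  rw [← map_ofNat (C (R := R))]
  exact (map_ne_zero_iff C C_injective).2 h

variable (R) in
theorem two_mul_cast_pentagonal (j : ℤ) : 2 * (pentagonal j : R) = j * (3 * j - 1) := by
  exact_mod_cast congrArg (Int.cast : ℤ → R) (two_mul_natCast_pentagonal j)

variable (R) in
theorem two_mul_cast_triangular (j : ℤ) : 2 * (triangular j : R) = j * (j + 1) := by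
  exact_mod_cast congrArg (Int.cast : ℤ → R) (two_mul_natCast_triangular j)

theorem residuePart_two_pentagonalSeries : residuePart (2 : ZMod 7) (pentagonalSeries R) =
    -(X ^ 2 * expand 49 (by norm_num) (pentagonalSeries R)) := by
  have hshift (j : ℤ) : pentagonal (7 * j - 1) = 49 * pentagonal j + 2 := by
    have h := two_mul_natCast_pentagonal j
    have h' := two_mul_natCast_pentagonal (7 * j - 1)
    zify
    linarith
  rw [← neg_one_smul R (_ * _)]
  refine residuePart_eq_smul_X_pow_mul_expand (by norm_num) (by norm_num)
    (fun n => coeff_pentagonalSeries_eq_zero R) hshift ?_ ?_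
  · intro i hi
    have hmod : ∀ x : ZMod 7, 2 * 2 = x * (3 * x - 1) → x = -1 := by decide
    have h := hmod i (by rw [← two_mul_cast_pentagonal, hi]; rfl)
    obtain ⟨j, hj⟩ := (ZMod.intCast_zmod_eq_zero_iff_dvd (i + 1) 7).1 (by push_cast; rw [h]; ring)
    exact ⟨j, by push_cast at hj; lia⟩
  · intro j
    rw [coeff_pentagonalSeries_pentagonal, coeff_pentagonalSeries_pentagonal,
      show 7 * j - 1 = 2 * (3 * j) + j - 1 by ring, Int.negOnePow_sub, Int.negOnePow_add]
    simp

theorem residuePart_six_pentagonalSeries_cube :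
    residuePart (6 : ZMod 7) (pentagonalSeries R ^ 3) =
      7 * residuePart (2 : ZMod 7) (pentagonalSeries R) ^ 3 := by
  have hshift (j : ℤ) : triangular (7 * j + 3) = 49 * triangular j + 6 := by
    have h := two_mul_natCast_triangular j
    have h' := two_mul_natCast_triangular (7 * j + 3)
    zify
    linarith
  have hpart : residuePart ((6 : ℕ) : ZMod 7) (pentagonalSeries R ^ 3) =
      (-7 : R) • (X ^ 6 * expand 49 (by norm_num) (pentagonalSeries R ^ 3)) := by
    refine residuePart_eq_smul_X_pow_mul_expand (by norm_num) (by norm_num)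
      (fun n => coeff_pentagonalSeries_cube_eq_zero R) hshift ?_ ?_
    · intro i hi
      have hmod : ∀ x : ZMod 7, 2 * 6 = x * (x + 1) → x = 3 := by decide
      have h := hmod i (by rw [← two_mul_cast_triangular, hi]; rfl)
      obtain ⟨j, hj⟩ := (ZMod.intCast_zmod_eq_zero_iff_dvd (i - 3) 7).1
        (by push_cast; rw [h]; ring)
      exact ⟨j, by push_cast at hj; lia⟩
    · intro j
      rw [coeff_triangular_pentagonalSeries_cube, coeff_triangular_pentagonalSeries_cube,
        show 7 * j + 3 = 2 * (3 * j + 1) + j + 1 by ring, Int.negOnePow_succ, Int.negOnePow_add,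
        Int.negOnePow_two_mul]
      push_cast
      ring
  rw [Nat.cast_ofNat] at hpart
  rw [hpart, residuePart_two_pentagonalSeries, map_pow, neg_smul, smul_eq_C_mul, map_ofNat]
  ring

variable (R) in
theorem pentagonalSeries_eq_add_residuePart : pentagonalSeries R =
    residuePart (0 : ZMod 7) (pentagonalSeries R) + residuePart (1 : ZMod 7) (pentagonalSeries R) +
      residuePart (2 : ZMod 7) (pentagonalSeries R) +
      residuePart (5 : ZMod 7) (pentagonalSeries R) := by
  have hmod : ∀ x t : ZMod 7, 2 * t = x * (3 * x - 1) → t = 0 ∨ t = 1 ∨ t = 2 ∨ t = 5 := by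
    decide
  ext n
  simp only [map_add, coeff_residuePart]
  by_cases hn : n ∈ Set.range pentagonal
  · obtain ⟨j, rfl⟩ := hn
    rcases hmod j _ (two_mul_cast_pentagonal _ j) with h | h | h | h <;>
      simp +decide [h]
  · simp [coeff_pentagonalSeries_eq_zero R hn]

theorem residuePart_pentagonalSeries_cube_eq_zero {r : ZMod 7}
    (hr : r = 2 ∨ r = 4 ∨ r = 5) : residuePart r (pentagonalSeries R ^ 3) = 0 := by
  have hmod : ∀ x t : ZMod 7, 2 * t = x * (x + 1) → ¬ (t = 2 ∨ t = 4 ∨ t = 5) := by decide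
  exact residuePart_eq_zero (fun n => coeff_pentagonalSeries_cube_eq_zero R)
    fun i hi => hmod i _ (two_mul_cast_triangular _ i) (hi ▸ hr)

theorem sevenDissection_pentagonalSeries [NoZeroDivisors R] (h6 : (6 : R) ≠ 0) : SevenDissection
    (residuePart (0 : ZMod 7) (pentagonalSeries R)) (residuePart (1 : ZMod 7) (pentagonalSeries R))
    (residuePart (2 : ZMod 7) (pentagonalSeries R))
    (residuePart (5 : ZMod 7) (pentagonalSeries R)) := by
  have h6' : (6 : R⟦X⟧) ≠ 0 := powerSeries_ofNat_ne_zero h6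
  have h3 : (3 : R⟦X⟧) ≠ 0 := fun h => h6' (by linear_combination 2 * h)
  obtain ⟨htwo, hfour, hfive, hsix⟩ := residuePart_cube
    (residuePart_mem (0 : ZMod 7) (pentagonalSeries R)) (residuePart_mem 1 (pentagonalSeries R))
    (residuePart_mem 2 (pentagonalSeries R)) (residuePart_mem 5 (pentagonalSeries R))
  rw [← pentagonalSeries_eq_add_residuePart] at htwo hfour hfive hsix
  rw [residuePart_pentagonalSeries_cube_eq_zero (by decide)] at htwo hfour hfive
  rw [residuePart_six_pentagonalSeries_cube] at hsix
  exact {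
    part_two := (mul_eq_zero.1 htwo.symm).resolve_left h3
    part_four := (mul_eq_zero.1 hfour.symm).resolve_left h3
    part_five := (mul_eq_zero.1 hfive.symm).resolve_left h3
    part_six := mul_left_cancel₀ h6' (by linear_combination -hsix) }

end SevenDissectionOfEulerProduct

section PartitionsModFortyNine

open PowerSeries

open PowerSeries.WithPiTopology in
theorem mk_p_mul_pentagonalSeries (R : Type*) [CommRing R] :
    mk (fun n => (p n : R)) * pentagonalSeries R = 1 := by
  let _ : TopologicalSpace R := ⊥
  have : DiscreteTopology R := ⟨rfl⟩
  have hcard : (mk fun n => ((Nat.Partition.restricted n fun _ => True).card : R)) =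
      mk fun n => (p n : R) := by
    simp only [Nat.Partition.restricted, implies_true,
      Finset.filter_true, Finset.card_univ, p]
  have hprod := (Nat.Partition.hasProd_powerSeriesMk_card_restricted R fun _ => True).mul
    (hasProd_one_sub_X_pow R)
  simp only [if_true, pow_mul, hcard, tsum_pow_mul_one_sub_of_constantCoeff_eq_zero (R := R)
    (f := X ^ (_ + 1)) (by simp)] at hprod
  exact hprod.unique hasProd_one

theorem natCast_dvd_of_map_castRingHom_eq_zero {n : ℕ} {f : ℤ⟦X⟧}
    (h : map (Int.castRingHom (ZMod n)) f = 0) : (n : ℤ⟦X⟧) ∣ f := by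
  have hdvd (k : ℕ) : (n : ℤ) ∣ f.coeff k := by
    rw [← ZMod.intCast_zmod_eq_zero_iff_dvd, ← eq_intCast (Int.castRingHom (ZMod n)),
      ← coeff_map, h, map_zero]
  choose g hg using hdvd
  refine ⟨mk g, ?_⟩
  ext k
  rw [← map_natCast (C (R := ℤ)), coeff_C_mul, coeff_mk, hg]

theorem expand_eq_pow {q : ℕ} [Fact q.Prime] (hq : q ≠ 0) (f : (ZMod q)⟦X⟧) :
    expand q hq f = f ^ q := by
  have h := MvPowerSeries.map_frobenius_expand q hq (f := f)
  rwa [ZMod.frobenius_zmod, MvPowerSeries.map_id] at h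

theorem map_pentagonalSeries {R S : Type*} [CommRing R] [CommRing S] (φ : R →+* S) :
    map φ (pentagonalSeries R) = pentagonalSeries S := by
  ext n
  by_cases hn : n ∈ Set.range pentagonal
  · obtain ⟨j, rfl⟩ := hn
    simp
  · simp [coeff_pentagonalSeries_eq_zero _ hn]

theorem map_residuePart {R S : Type*} [CommRing R] [CommRing S] (φ : R →+* S) {m : ℕ}
    (r : ZMod m) (f : R⟦X⟧) : map φ (residuePart r f) = residuePart r (map φ f) := by
  ext n
  simp only [coeff_map, coeff_residuePart, apply_ite φ, map_zero]

/-- The form `quarticForm` with coefficients `1`, `1`, `1`, `l`, evaluated at the parts of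
`∏ (1 - Xⁱ)` with exponents `0`, `1`, `2`, `5` modulo `7`. -/
noncomputable def eulerQuarticForm (R : Type*) [CommRing R] (l : ℤ) : R⟦X⟧ :=
  quarticForm (residuePart (0 : ZMod 7) (pentagonalSeries R))
    (residuePart (1 : ZMod 7) (pentagonalSeries R)) (residuePart (2 : ZMod 7) (pentagonalSeries R))
    (residuePart (5 : ZMod 7) (pentagonalSeries R)) 1 1 1 l

theorem map_eulerQuarticForm {R S : Type*} [CommRing R] [CommRing S] (φ : R →+* S) (l : ℤ) :
    map φ (eulerQuarticForm R l) = eulerQuarticForm S l := by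
  simp only [eulerQuarticForm, quarticForm, map_add, map_mul, map_pow, map_intCast,
    map_residuePart, map_pentagonalSeries]

theorem residuePart_five_mul_eulerQuarticForm_sq {R : Type*} [CommRing R] [NoZeroDivisors R]
    (h6 : (6 : R) ≠ 0) {P : R⟦X⟧} (hP : P * pentagonalSeries R = 1) :
    residuePart (5 : ZMod 7) P * eulerQuarticForm R 8 ^ 2 =
      7 * residuePart (2 : ZMod 7) (pentagonalSeries R) ^ 3 * eulerQuarticForm R 1 :=
  (sevenDissection_pentagonalSeries h6).residuePart_mul_quarticForm_sq (residuePart_mem _ _)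
    (residuePart_mem _ _) (residuePart_mem _ _) (residuePart_mem _ _)
    (pentagonalSeries_eq_add_residuePart R ▸ hP)

instance : CharP (ZMod 7)⟦X⟧ 7 := charP_of_injective_algebraMap C_injective 7

theorem residuePart_two_pentagonalSeries_zmod_seven :
    residuePart (2 : ZMod 7) (pentagonalSeries (ZMod 7)) =
      -(X ^ 2 * pentagonalSeries (ZMod 7) ^ 49) := by
  rw [residuePart_two_pentagonalSeries, expand_mul 7 (by norm_num) 7 (by norm_num), expand_eq_pow,
    expand_eq_pow, ← pow_mul]

theorem eulerQuarticForm_zmod_seven_sq :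
    eulerQuarticForm (ZMod 7) 8 ^ 2 = X ^ 2 * pentagonalSeries (ZMod 7) ^ 56 := by
  rw [eulerQuarticForm, (sevenDissection_pentagonalSeries (by decide)).quarticForm_sq_of_charP,
    ← pentagonalSeries_eq_add_residuePart, residuePart_two_pentagonalSeries_zmod_seven]
  ring

theorem eulerQuarticForm_zmod_seven_one :
    eulerQuarticForm (ZMod 7) 1 = eulerQuarticForm (ZMod 7) 8 := by
  have h18 : ((1 : ℤ) : (ZMod 7)⟦X⟧) = (8 : ℤ) :=
    (CharP.intCast_eq_intCast _ 7).2 (by decide)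
  simp only [eulerQuarticForm, quarticForm, ← h18]

theorem eulerQuarticForm_zmod_seven_ne_zero : eulerQuarticForm (ZMod 7) 8 ≠ 0 := by
  have hF : pentagonalSeries (ZMod 7) ≠ 0 := fun h => by
    simpa [h] using coeff_pentagonalSeries_pentagonal (ZMod 7) 0
  rw [← pow_ne_zero_iff two_ne_zero, eulerQuarticForm_zmod_seven_sq]
  exact mul_ne_zero (pow_ne_zero _ X_ne_zero) (pow_ne_zero _ hF)

theorem seven_dvd_residuePart_five {P : ℤ⟦X⟧} (hP : P * pentagonalSeries ℤ = 1) :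
    7 ∣ residuePart (5 : ZMod 7) P := by
  refine natCast_dvd_of_map_castRingHom_eq_zero (n := 7) ?_
  have h := congrArg (map (Int.castRingHom (ZMod 7)))
    (residuePart_five_mul_eulerQuarticForm_sq (by decide) hP)
  have h7 : (7 : (ZMod 7)⟦X⟧) = 0 := CharP.cast_eq_zero _ 7
  simp only [map_mul, map_pow, map_ofNat, h7, zero_mul, map_eulerQuarticForm] at h
  exact (mul_eq_zero.1 h).resolve_right (pow_ne_zero 2 eulerQuarticForm_zmod_seven_ne_zero)

/-- Modulo `7`, the identity `T * H ^ 2 = C ^ 3 * H` gives `T ^ 2 * H ^ 2 = C ^ 6`, in which `H ^ 2`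
and `C` are known. -/
theorem map_castRingHom_sq_of_residuePart_five_eq {P T : ℤ⟦X⟧} (hP : P * pentagonalSeries ℤ = 1)
    (hT : residuePart (5 : ZMod 7) P = 7 * T) :
    map (Int.castRingHom (ZMod 7)) T ^ 2 = (X ^ 5 * pentagonalSeries (ZMod 7) ^ 119) ^ 2 := by
  have hH := eulerQuarticForm_zmod_seven_ne_zero
  set H := eulerQuarticForm (ZMod 7) 8 with hH_def
  set C := residuePart (2 : ZMod 7) (pentagonalSeries (ZMod 7)) with hC_def
  have hcancel : T * eulerQuarticForm ℤ 8 ^ 2 =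
      residuePart (2 : ZMod 7) (pentagonalSeries ℤ) ^ 3 * eulerQuarticForm ℤ 1 := by
    have h := residuePart_five_mul_eulerQuarticForm_sq (by decide) hP
    rw [hT, mul_assoc, mul_assoc] at h
    exact mul_left_cancel₀ (powerSeries_ofNat_ne_zero (by norm_num)) h
  have hmap := congrArg (map (Int.castRingHom (ZMod 7))) hcancel
  simp only [map_mul, map_pow, map_eulerQuarticForm, map_residuePart, map_pentagonalSeries,
    eulerQuarticForm_zmod_seven_one, ← hH_def, ← hC_def] at hmap
  have hroot : map (Int.castRingHom (ZMod 7)) T * H = C ^ 3 :=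
    mul_right_cancel₀ hH (by linear_combination hmap)
  have hsq := congrArg (· ^ 2) hroot
  simp only [mul_pow, hC_def, residuePart_two_pentagonalSeries_zmod_seven] at hsq
  refine mul_right_cancel₀ (pow_ne_zero 2 hH) (hsq.trans ?_)
  rw [hH_def, eulerQuarticForm_zmod_seven_sq]
  ring

theorem coeff_pentagonalSeries_zmod_seven_pow_seventeen {n : ℕ}
    (hn : n % 7 ∈ ({2, 4, 5, 6} : Finset ℕ)) :
    (pentagonalSeries (ZMod 7) ^ 17).coeff n = 0 := by
  set F := pentagonalSeries (ZMod 7)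
  have hcube : residuePart (n : ZMod 7) (F ^ 3) = 0 := by
    rw [← ZMod.natCast_mod n 7]
    simp only [Finset.mem_insert, Finset.mem_singleton] at hn
    rcases hn with h | h | h | h <;> rw [h]
    · exact residuePart_pentagonalSeries_cube_eq_zero (Or.inl rfl)
    · exact residuePart_pentagonalSeries_cube_eq_zero (Or.inr (Or.inl rfl))
    · exact residuePart_pentagonalSeries_cube_eq_zero (Or.inr (Or.inr rfl))
    · rw [Nat.cast_ofNat, residuePart_six_pentagonalSeries_cube,
        show (7 : (ZMod 7)⟦X⟧) = 0 from CharP.cast_eq_zero _ 7, zero_mul]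
  have hmem : expand 7 (by norm_num) (F ^ 2) ∈ residueSubmodule (ZMod 7) (0 : ZMod 7) :=
    fun k hk => coeff_expand_of_not_dvd _ _ _ ((ZMod.natCast_eq_zero_iff k 7).not.1 hk)
  have hpart : residuePart (n : ZMod 7) (F ^ 17) = 0 := by
    rw [show F ^ 17 = F ^ 3 * (F ^ 2) ^ 7 by ring, ← expand_eq_pow (by norm_num),
      residuePart_mul_of_mem _ _ hmem, sub_zero, hcube, zero_mul]
  have hcoeff := congrArg (coeff n) hpart
  rwa [coeff_residuePart, if_pos rfl, map_zero] at hcoeff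

theorem forty_nine_dvd_p_seven_mul_add_five {n : ℕ}
    (hn : n % 7 ∈ ({2, 4, 5, 6} : Finset ℕ)) :
    49 ∣ p (7 * n + 5) := by
  have hP := mk_p_mul_pentagonalSeries ℤ
  obtain ⟨T, hT⟩ := seven_dvd_residuePart_five hP
  have hroot : (X ^ 5 * pentagonalSeries (ZMod 7) ^ 119).coeff (7 * n + 5) = 0 := by
    rw [coeff_X_pow_mul, pow_mul _ 17 7, ← expand_eq_pow (by norm_num), coeff_expand_mul,
      coeff_pentagonalSeries_zmod_seven_pow_seventeen hn]
  have hcoeff : (map (Int.castRingHom (ZMod 7)) T).coeff (7 * n + 5) = 0 := by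
    rcases sq_eq_sq_iff_eq_or_eq_neg.1 (map_castRingHom_sq_of_residuePart_five_eq hP hT) with h | h
    · rw [h, hroot]
    · rw [h, map_neg, hroot, neg_zero]
  rw [coeff_map, eq_intCast, ZMod.intCast_zmod_eq_zero_iff_dvd] at hcoeff
  have hp : (p (7 * n + 5) : ℤ) = 7 * T.coeff (7 * n + 5) := by
    have h := congrArg (coeff (7 * n + 5)) hT
    have hres : ((7 * n + 5 : ℕ) : ZMod 7) = 5 := by
      push_cast
      rw [show (7 : ZMod 7) = 0 from rfl]
      ring
    rwa [coeff_residuePart, if_pos hres, coeff_mk, ← map_ofNat (C (R := ℤ)), coeff_C_mul] at h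
  zify
  rw [hp]
  exact mul_dvd_mul_left 7 hcoeff

theorem p_49n_add_33_mod_49_general {n : ℕ} (hn : n % 49 ∈ ({19, 33, 40, 47} : Finset ℕ)) :
    p n % 49 = 0 := by
  simp only [Finset.mem_insert, Finset.mem_singleton] at hn
  have hm : n / 7 % 7 ∈ ({2, 4, 5, 6} : Finset ℕ) := by
    simp only [Finset.mem_insert, Finset.mem_singleton]
    lia
  have h := forty_nine_dvd_p_seven_mul_add_five hm
  rw [show 7 * (n / 7) + 5 = n by lia] at h
  exact Nat.mod_eq_zero_of_dvd h

end PartitionsModFortyNine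

/-- Ramanujan-type congruence: `p(49n + 33) ≡ 0 (mod 49)` for all `n ≥ 0`. -/
theorem p_49n_add_33_mod_49 (n : ℕ) : p (49 * n + 33) % 49 = 0 :=
  p_49n_add_33_mod_49_general (by rw [Nat.mul_add_mod]; decide)
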